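/- arXiv:2301.07004 — 5 statements merged into one kernel-verified Lean document; each statement's English description precedes it below -/
import Mathlib

section
/- In any generalized open maps situation, (𝔼,𝕊)-open maps are closed under composition: if f : X → Y and g : Y → Z are (𝔼,𝕊)-open morphisms of 𝕄, then g ∘ f : X → Z is (𝔼,𝕊)-open. -/
open CategoryTheory

/-- A generalized open maps situation over a category `M` and an object assignment
`J : V → M`: a small category with set of objects `V` together with the action on
morphisms of a functor into `M` that acts as `J` on objects.  A pair of such data
`(𝔼, 𝕊)` (on the same `V` and `J`) is exactly a generalized open maps situation. -/
structure PathCat (V : Type*) {M : Type*} [Category M] (J : V → M) where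
  Hom : V → V → Type*
  id : ∀ v, Hom v v
  comp : ∀ {u v w : V}, Hom u v → Hom v w → Hom u w
  id_comp : ∀ {v w : V} (f : Hom v w), comp (id v) f = f
  comp_id : ∀ {v w : V} (f : Hom v w), comp f (id w) = f
  assoc : ∀ {a b c d : V} (f : Hom a b) (g : Hom b c) (h : Hom c d),
    comp (comp f g) h = comp f (comp g h)
  map : ∀ {v w : V}, Hom v w → (J v ⟶ J w)
  map_id : ∀ v, map (id v) = 𝟙 (J v)
  map_comp : ∀ {u v w : V} (f : Hom u v) (g : Hom v w), map (comp f g) = map f ≫ map g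

/-- `f : X ⟶ Y` is `(𝔼,𝕊)`-open: every commutative square `J_𝔼 e ≫ y = x ≫ f`
(with `e : v ⟶ w` in `𝔼`) admits a generalized lifting `e' : v ⟶ u` in `𝔼`,
`s : u ⟶ w` in `𝕊`, `x' : J u ⟶ X` with `J_𝔼 e' ≫ x' = x`, `J_𝔼 e' ≫ J_𝕊 s = J_𝔼 e`
and `x' ≫ f = J_𝕊 s ≫ y`. -/
def PathCat.IsOpen {V : Type*} {M : Type*} [Category M] {J : V → M}
    (E S : PathCat V J) {X Y : M} (f : X ⟶ Y) : Prop :=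
  ∀ ⦃v w : V⦄ (e : E.Hom v w) (x : J v ⟶ X) (y : J w ⟶ Y),
    E.map e ≫ y = x ≫ f →
    ∃ (u : V) (e' : E.Hom v u) (s : S.Hom u w) (x' : J u ⟶ X),
      E.map e' ≫ x' = x ∧ E.map e' ≫ S.map s = E.map e ∧ x' ≫ f = S.map s ≫ y

/-- In any generalized open maps situation, `(𝔼,𝕊)`-open maps are closed under
composition. -/
theorem PathCat.IsOpen.comp' {V : Type*} {M : Type*} [Category M] {J : V → M}
    (E S : PathCat V J) {X Y Z : M} (f : X ⟶ Y) (g : Y ⟶ Z)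
    (hf : E.IsOpen S f) (hg : E.IsOpen S g) : E.IsOpen S (f ≫ g) := by
  intro v w e x z h
  -- Lift first along `g`, then lift the resulting square along `f`; the two `𝕊`-parts compose.
  obtain ⟨u₁, e₁, s₁, y, hy, he₁, hyg⟩ := hg e (x ≫ f) z (by rw [h, Category.assoc])
  obtain ⟨u₂, e₂, s₂, x', hx, he₂, hxf⟩ := hf e₁ x y hy
  refine ⟨u₂, e₂, S.comp s₂ s₁, x', hx, ?_, ?_⟩
  · rw [S.map_comp, ← Category.assoc, he₂, he₁]
  · rw [S.map_comp, ← Category.assoc, hxf, Category.assoc, hyg, Category.assoc]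
end

section
/- In any generalized open maps situation, (𝔼,𝕊)-open maps are stable under pullback: if the square with morphisms k : D → C, h : D → B, g : C → A, f : B → A (f ∘ h = g ∘ k) is a pullback square in 𝕄 and f is (𝔼,𝕊)-open, then k is (𝔼,𝕊)-open. -/
open CategoryTheory

/-- In any generalized open maps situation, `(𝔼,𝕊)`-open maps are stable under
pullback: if `h ≫ f = k ≫ g` is a pullback square and `f` is `(𝔼,𝕊)`-open,
then `k` is `(𝔼,𝕊)`-open. -/
theorem PathCat.IsOpen.of_isPullback {V : Type*} {M : Type*} [Category M] {J : V → M}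
    (E S : PathCat V J) {A B C D : M}
    (k : D ⟶ C) (h : D ⟶ B) (g : C ⟶ A) (f : B ⟶ A)
    (hpb : IsPullback h k f g) (hf : E.IsOpen S f) : E.IsOpen S k := by
  intro v w e x y comm
  -- Paste with the pullback square and lift `x ≫ h` against `f`.
  obtain ⟨u, e', s, b, hb, hes, hbf⟩ := hf e (x ≫ h) (y ≫ g) (by
    rw [← Category.assoc, comm, Category.assoc, Category.assoc, hpb.w])
  have hw : b ≫ f = (S.map s ≫ y) ≫ g := by rw [hbf, Category.assoc]
  refine ⟨u, e', s, hpb.lift b (S.map s ≫ y) hw, ?_, hes, hpb.lift_snd _ _ hw⟩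
  -- Both maps `J v ⟶ D` have the same composites with the projections `h` and `k`.
  apply hpb.hom_ext
  · rw [Category.assoc, hpb.lift_fst, hb]
  · rw [Category.assoc, hpb.lift_snd, ← Category.assoc, hes, comm]
end

section
/- Let A and B be objects of 𝕄 in a generalized open maps situation with a distinguished element 0 ∈ V such that J0 is initial in 𝕄. If there is a span A ← C → B with left leg f : C → A an (𝔼,𝕊)-open map and right leg g : C → B any morphism of 𝕄, then the set R_{f,g} of all spans A ← Jv → B (a : Jv → A, b : Jv → B, v ∈ V) such that there exists c : Jv → C with a = f ∘ c and b = g ∘ c is a strong path simulation from A to B. Consequently, if A and B are (𝔼,𝕊)-bisimilar (i.e., there is a span of (𝔼,𝕊)-open maps between them), then there is a strong path bisimulation between A and B. -/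
/-!
Initiality of `J z` makes the initial span factor through `C`, and precomposition gives backward
closure. For forward closure, let `c : J v ⟶ C` witness `(a, b)` and let `a = E.map e ≫ a'`.
Then `E.map e ≫ a' = c ≫ f` is a lifting problem for `f`, and composing its generalized lift
`x' : J u ⟶ C` with `g` gives the required `b' : J u ⟶ B`, with `x'` itself witnessing that the
new span factors through `C`.
For the second claim, the converse of `R_{f,g}` is `R_{g,f}`, so openness of both legs makes
`R_{f,g}` a strong path bisimulation.
-/

open CategoryTheory

open Limits

variable {V : Type*} {M : Type*} [Category M] {J : V → M}

/-- A path simulation from `A` to `B`: a set of spans `A ⟵ Jv ⟶ B` containing the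
initial span and closed forward. Here `z ∈ V` is such that `J z` is initial in `𝕄`. -/
def PathCat.IsPathSim (E S : PathCat V J) {A B : M} (z : V) (hz : IsInitial (J z))
    (R : Set ((v : V) × ((J v ⟶ A) × (J v ⟶ B)))) : Prop :=
  (⟨z, hz.to A, hz.to B⟩ ∈ R) ∧
  ∀ ⦃v : V⦄ ⦃a : J v ⟶ A⦄ ⦃b : J v ⟶ B⦄, (⟨v, a, b⟩ : (v : V) × ((J v ⟶ A) × (J v ⟶ B))) ∈ R →
    ∀ ⦃w : V⦄ (e : E.Hom v w) (a' : J w ⟶ A), a = E.map e ≫ a' →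
      ∃ (u : V) (e' : E.Hom v u) (s : S.Hom u w) (b' : J u ⟶ B),
        E.map e = E.map e' ≫ S.map s ∧ b = E.map e' ≫ b' ∧
        (⟨u, S.map s ≫ a', b'⟩ : (v : V) × ((J v ⟶ A) × (J v ⟶ B))) ∈ R

/-- A strong path simulation: a path simulation that is moreover backward closed. -/
def PathCat.IsStrongPathSim (E S : PathCat V J) {A B : M} (z : V) (hz : IsInitial (J z))
    (R : Set ((v : V) × ((J v ⟶ A) × (J v ⟶ B)))) : Prop :=
  E.IsPathSim S z hz R ∧
  ∀ ⦃v : V⦄ ⦃a : J v ⟶ A⦄ ⦃b : J v ⟶ B⦄, (⟨v, a, b⟩ : (v : V) × ((J v ⟶ A) × (J v ⟶ B))) ∈ R →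
    ∀ ⦃w : V⦄ (e : E.Hom w v),
      (⟨w, E.map e ≫ a, E.map e ≫ b⟩ : (v : V) × ((J v ⟶ A) × (J v ⟶ B))) ∈ R

/-- The converse of a set of spans. -/
def PathCat.convSpans {A B : M} (R : Set ((v : V) × ((J v ⟶ A) × (J v ⟶ B)))) :
    Set ((v : V) × ((J v ⟶ B) × (J v ⟶ A))) :=
  {γ | (⟨γ.1, γ.2.2, γ.2.1⟩ : (v : V) × ((J v ⟶ A) × (J v ⟶ B))) ∈ R}

/-- A strong path bisimulation: `R` and its converse are strong path simulations. -/
def PathCat.IsStrongPathBisim (E S : PathCat V J) {A B : M} (z : V) (hz : IsInitial (J z))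
    (R : Set ((v : V) × ((J v ⟶ A) × (J v ⟶ B)))) : Prop :=
  E.IsStrongPathSim S z hz R ∧ E.IsStrongPathSim S z hz (PathCat.convSpans R)

/-- If `f : C ⟶ A` is `(𝔼,𝕊)`-open and `g : C ⟶ B` is any morphism, then the set
`R_{f,g}` of spans that factor through `C` is a strong path simulation; consequently,
`(𝔼,𝕊)`-bisimilar objects are related by a strong path bisimulation. -/
theorem PathCat.isStrongPathSim_of_span (E S : PathCat V J) (z : V)
    (hz : IsInitial (J z)) :
    (∀ (A B C : M) (f : C ⟶ A) (g : C ⟶ B), E.IsOpen S f →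
      E.IsStrongPathSim S z hz
        {γ : (v : V) × ((J v ⟶ A) × (J v ⟶ B)) |
          ∃ c : J γ.1 ⟶ C, γ.2.1 = c ≫ f ∧ γ.2.2 = c ≫ g}) ∧
    (∀ A B : M, (∃ (C : M) (f : C ⟶ A) (g : C ⟶ B), E.IsOpen S f ∧ E.IsOpen S g) →
      ∃ R : Set ((v : V) × ((J v ⟶ A) × (J v ⟶ B))), E.IsStrongPathBisim S z hz R) := by
  have sim : ∀ (A B C : M) (f : C ⟶ A) (g : C ⟶ B), E.IsOpen S f →
      E.IsStrongPathSim S z hz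
        {γ : (v : V) × ((J v ⟶ A) × (J v ⟶ B)) |
          ∃ c : J γ.1 ⟶ C, γ.2.1 = c ≫ f ∧ γ.2.2 = c ≫ g} := by
    intro A B C f g hf
    refine ⟨⟨⟨hz.to C, hz.hom_ext _ _, hz.hom_ext _ _⟩, ?_⟩, ?_⟩
    · rintro v a b ⟨c, hca, hcb⟩ w e a' ha
      obtain ⟨u, e', s, x', hx, hs, hy⟩ := hf e c a' (ha.symm.trans hca)
      refine ⟨u, e', s, x' ≫ g, hs.symm, ?_, x', hy.symm, rfl⟩
      rw [← Category.assoc, hx]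
      exact hcb
    · rintro v a b ⟨c, hca, hcb⟩ w e
      dsimp only at hca hcb
      exact ⟨E.map e ≫ c, by simp [hca], by simp [hcb]⟩
  refine ⟨sim, ?_⟩
  rintro A B ⟨C, f, g, hf, hg⟩
  refine ⟨_, sim A B C f g hf, ?_⟩
  convert sim B A C g f hg using 1
  ext γ
  exact exists_congr fun _ => and_comm
end

section
/- Let n ≥ 1 and let G be an additive subgroup of ℝⁿ closed under componentwise minimum (for all x, y ∈ G, (min(x₁,y₁),…,min(xₙ,yₙ)) ∈ G). Let G_{≥0} = {x ∈ G | xᵢ ≥ 0 for all i}, ordered componentwise. Then (G_{≥0}, +, 0, ≤) is a strict rearrangement monoid. -/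
/-!
The monoid `G_{≥0}` is cancellative with least element `0`, its order is the divisibility order
(`a ≤ b` iff `b = a + c` for some `c`), and it has the Riesz decomposition property: if `a ≤ b + c`, then `a ⊓ b ≤ b` and
`a - a ⊓ b ≤ c` add up to `a`, and both lie in `G_{≥0}` because `G` is closed under componentwise
minimum. Any monoid with these properties is a strict rearrangement monoid: the Riesz property
extends to finitely many summands on the right (`exists_le_sum_eq`), and then the `xᵢ` are split one
at a time, each along what the previous ones have left over of the `yⱼ` (`exists_rearrangement`).
When the two totals agree, the inequalities `∑ᵢ uᵢⱼ ≤ yⱼ` have equal sums over `j`, so all of them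
are equalities.
-/

/-- A rearrangement monoid: whenever a sum of finitely many elements is below another
such sum, the summands can be rearranged accordingly. -/
def IsRearrangement (K : Type*) [AddCommMonoid K] [PartialOrder K] : Prop :=
  ∀ (n m : ℕ), 1 ≤ n → 1 ≤ m → ∀ (x : Fin n → K) (y : Fin m → K),
    (∑ i, x i) ≤ (∑ j, y j) →
    ∃ u : Fin n → Fin m → K,
      (∀ j, (∑ i, u i j) ≤ y j) ∧ (∀ i, (∑ j, u i j) = x i)

/-- A strict rearrangement monoid: a rearrangement monoid where the rearrangement
property additionally holds with `⊑` replaced by equality. -/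
def IsStrictRearrangement (K : Type*) [AddCommMonoid K] [PartialOrder K] : Prop :=
  IsRearrangement K ∧
  ∀ (n m : ℕ), 1 ≤ n → 1 ≤ m → ∀ (x : Fin n → K) (y : Fin m → K),
    (∑ i, x i) = (∑ j, y j) →
    ∃ u : Fin n → Fin m → K,
      (∀ j, (∑ i, u i j) = y j) ∧ (∀ i, (∑ j, u i j) = x i)

/-- The nonnegative part `G_{≥0}` of an additive subgroup `G` of `ℝⁿ`, as an additive
submonoid of `ℝⁿ`. -/
def nonnegPart (n : ℕ) (G : AddSubgroup (Fin n → ℝ)) : AddSubmonoid (Fin n → ℝ) where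
  carrier := {x | x ∈ G ∧ ∀ i, 0 ≤ x i}
  zero_mem' := ⟨G.zero_mem, fun i => by simp⟩
  add_mem' := fun ha hb =>
    ⟨G.add_mem ha.1 hb.1, fun i => by
      simpa using add_nonneg (ha.2 i) (hb.2 i)⟩

section Riesz

variable {K : Type*} [AddCommMonoid K] [PartialOrder K]

/-- The Riesz decomposition property for `m` summands, obtained from the case of two. -/
theorem exists_le_sum_eq (h0 : ∀ a : K, 0 ≤ a)
    (hriesz : ∀ a b c : K, a ≤ b + c → ∃ p q, p ≤ b ∧ q ≤ c ∧ p + q = a) :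
    ∀ (m : ℕ) (a : K) (y : Fin m → K), a ≤ ∑ j, y j →
      ∃ v : Fin m → K, (∀ j, v j ≤ y j) ∧ ∑ j, v j = a
  | 0, a, y, h => ⟨y, fun _ => le_rfl, le_antisymm (by simpa using h0 a) h⟩
  | m + 1, a, y, h => by
    rw [Fin.sum_univ_succ] at h
    obtain ⟨p, q, hp, hq, rfl⟩ := hriesz _ _ _ h
    obtain ⟨v, hv, rfl⟩ := exists_le_sum_eq h0 hriesz m q (fun j => y j.succ) hq
    refine ⟨Fin.cons p v, Fin.cases (by simpa using hp) (by simpa using hv), ?_⟩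
    simp [Fin.sum_univ_succ]

variable [IsOrderedCancelAddMonoid K]

theorem exists_rearrangement (h0 : ∀ a : K, 0 ≤ a)
    (hsub : ∀ a b : K, a ≤ b → ∃ c, a + c = b)
    (hriesz : ∀ a b c : K, a ≤ b + c → ∃ p q, p ≤ b ∧ q ≤ c ∧ p + q = a) (m : ℕ) :
    ∀ (n : ℕ) (x : Fin n → K) (y : Fin m → K), ∑ i, x i ≤ ∑ j, y j →
      ∃ u : Fin n → Fin m → K, (∀ j, ∑ i, u i j ≤ y j) ∧ ∀ i, ∑ j, u i j = x i
  | 0, _, y, _ => ⟨fun i => i.elim0, fun j => by simpa using h0 (y j), fun i => i.elim0⟩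
  | n + 1, x, y, h => by
    rw [Fin.sum_univ_succ] at h
    have hx : x 0 ≤ ∑ j, y j :=
      (le_add_of_nonneg_right (h0 _)).trans h
    obtain ⟨v, hv, hvx⟩ := exists_le_sum_eq h0 hriesz m (x 0) y hx
    choose w hw using fun j => hsub (v j) (y j) (hv j)
    have htail : ∑ i : Fin n, x i.succ ≤ ∑ j, w j := by
      simp only [← hw, Finset.sum_add_distrib, hvx] at h
      exact le_of_add_le_add_left h
    obtain ⟨u, hu, hux⟩ := exists_rearrangement h0 hsub hriesz m n (fun i => x i.succ) w htail
    refine ⟨Fin.cons v u, fun j => ?_, Fin.cases (by simpa using hvx) (by simpa using hux)⟩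
    rw [Fin.sum_univ_succ, ← hw j]
    simpa using add_le_add_right (hu j) (v j)

theorem isStrictRearrangement_of_riesz (h0 : ∀ a : K, 0 ≤ a)
    (hsub : ∀ a b : K, a ≤ b → ∃ c, a + c = b)
    (hriesz : ∀ a b c : K, a ≤ b + c → ∃ p q, p ≤ b ∧ q ≤ c ∧ p + q = a) :
    IsStrictRearrangement K := by
  refine ⟨fun n m _ _ x y h => exists_rearrangement h0 hsub hriesz m n x y h,
    fun n m _ _ x y h => ?_⟩
  obtain ⟨u, hu, hux⟩ := exists_rearrangement h0 hsub hriesz m n x y h.le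
  have htot : ∑ j, ∑ i, u i j = ∑ j, y j := by
    rw [Finset.sum_comm, ← h]
    exact Finset.sum_congr rfl fun i _ => hux i
  exact ⟨u, fun j =>
    (Finset.sum_eq_sum_iff_of_le fun j _ => hu j).1 htot j (Finset.mem_univ j), hux⟩

end Riesz

/-- If `G` is an additive subgroup of `ℝⁿ` (`n ≥ 1`) closed under componentwise
minimum, then `(G_{≥0}, +, 0, ≤)` (with the componentwise order) is a strict
rearrangement monoid (in particular an ordered commutative monoid). -/
theorem nonnegPart_isStrictRearrangement (n : ℕ) (hn : 1 ≤ n)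
    (G : AddSubgroup (Fin n → ℝ))
    (hmin : ∀ x ∈ G, ∀ y ∈ G, (fun i => min (x i) (y i)) ∈ G) :
    (∀ a b c : ↥(nonnegPart n G), a ≤ b → c + a ≤ c + b) ∧
    IsStrictRearrangement ↥(nonnegPart n G) := by
  refine ⟨fun a b c h => add_le_add_right h c, isStrictRearrangement_of_riesz
    (fun a => show ∀ i, 0 ≤ a.1 i from a.2.2) (fun a b h => ?_) (fun a b c h => ?_)⟩
  · exact ⟨⟨b.1 - a.1, G.sub_mem b.2.1 a.2.1, fun i => sub_nonneg.2 (h i)⟩,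
      Subtype.ext (add_sub_cancel a.1 b.1)⟩
  · have hp : (fun i => min (a.1 i) (b.1 i)) ∈ G := hmin _ a.2.1 _ b.2.1
    refine ⟨⟨_, hp, fun i => le_min (a.2.2 i) (b.2.2 i)⟩,
      ⟨_, G.sub_mem a.2.1 hp, fun i => sub_nonneg.2 (min_le_left _ _)⟩,
      fun i => min_le_right _ _, fun i => ?_, Subtype.ext (add_sub_cancel _ _)⟩
    have hi : a.1 i ≤ b.1 i + c.1 i := h i
    have hc : 0 ≤ c.1 i := c.2.2 i
    change a.1 i - min (a.1 i) (b.1 i) ≤ c.1 i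
    rcases min_cases (a.1 i) (b.1 i) with h' | h' <;> linarith
end

section
/- Let (L, ≤, ⊔, ⊓, ⊥) be a lattice with bottom element ⊥. Then the ordered commutative monoid (L, ⊔, ⊥, ≤) is a rearrangement monoid if and only if the lattice L is distributive. Furthermore, when L is distributive, (L, ⊔, ⊥, ≤) is a strict rearrangement monoid. -/
/-!
If `L` is distributive, the meets `u i j = x i ⊓ y j` are a rearrangement: a fixed element distributes
over finite joins, so row `i` joins to `x i ⊓ ⨆ y`, which is `x i` because `x i ≤ ⨆ x ≤ ⨆ y`; column `j`
is visibly below `y j`, and joins to `y j` when `⨆ y ≤ ⨆ x` as well.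

Conversely, rearranging the single joinand `x ⊓ (y ⊔ z)` against `y, z` writes it as `a ⊔ b` with `a ≤ y`
and `b ≤ z`. Both `a` and `b` lie below `x`, so `a ⊔ b ≤ (x ⊓ y) ⊔ (x ⊓ z)`, which is the nontrivial
half of distributivity.
-/

/-- The rearrangement property for the ordered commutative monoid `(L, ⊔, ⊥, ≤)`
associated with a join-semilattice with bottom element: whenever a finite join is
below another finite join, the joinands can be rearranged accordingly. -/
def IsSupRearrangement (L : Type*) [SemilatticeSup L] [OrderBot L] : Prop :=
  ∀ (n m : ℕ), 1 ≤ n → 1 ≤ m → ∀ (x : Fin n → L) (y : Fin m → L),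
    Finset.univ.sup x ≤ Finset.univ.sup y →
    ∃ u : Fin n → Fin m → L,
      (∀ j, Finset.univ.sup (fun i => u i j) ≤ y j) ∧
      (∀ i, Finset.univ.sup (u i) = x i)

/-- The strict version of the rearrangement property for `(L, ⊔, ⊥, ≤)`, with `≤`
replaced by equality. -/
def IsSupRearrangementEq (L : Type*) [SemilatticeSup L] [OrderBot L] : Prop :=
  ∀ (n m : ℕ), 1 ≤ n → 1 ≤ m → ∀ (x : Fin n → L) (y : Fin m → L),
    Finset.univ.sup x = Finset.univ.sup y →
    ∃ u : Fin n → Fin m → L,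
      (∀ j, Finset.univ.sup (fun i => u i j) = y j) ∧
      (∀ i, Finset.univ.sup (u i) = x i)

/-- Binary distributivity propagates to finite joins, so an element below a finite join is the join of
its meets with the joinands. -/
theorem sup_inf_eq_of_le_sup {L ι : Type*} [Lattice L] [OrderBot L]
    (h : ∀ x y z : L, x ⊓ (y ⊔ z) = (x ⊓ y) ⊔ (x ⊓ z)) (s : Finset ι) (a : L) (f : ι → L)
    (ha : a ≤ s.sup f) : s.sup (fun i => a ⊓ f i) = a := by
  classical
  have key : ∀ t : Finset ι, t.sup (fun i => a ⊓ f i) = a ⊓ t.sup f := by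
    intro t
    induction t using Finset.induction_on with
    | empty => simp
    | insert i t _ ih => rw [Finset.sup_insert, Finset.sup_insert, ih, h]
  rw [key, inf_eq_left.mpr ha]

/-- For a lattice `L` with bottom element, the ordered commutative monoid
`(L, ⊔, ⊥, ≤)` is a rearrangement monoid iff `L` is distributive; and when `L` is
distributive it is moreover a strict rearrangement monoid. -/
theorem supRearrangement_iff_distrib (L : Type*) [Lattice L] [OrderBot L] :
    (IsSupRearrangement L ↔ ∀ x y z : L, x ⊓ (y ⊔ z) = (x ⊓ y) ⊔ (x ⊓ z)) ∧
    ((∀ x y z : L, x ⊓ (y ⊔ z) = (x ⊓ y) ⊔ (x ⊓ z)) →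
      (IsSupRearrangement L ∧ IsSupRearrangementEq L)) := by
  have distrib_imp : (∀ x y z : L, x ⊓ (y ⊔ z) = (x ⊓ y) ⊔ (x ⊓ z)) →
      (IsSupRearrangement L ∧ IsSupRearrangementEq L) := by
    intro h
    have row : ∀ {n m : ℕ} (x : Fin n → L) (y : Fin m → L),
        Finset.univ.sup x ≤ Finset.univ.sup y →
        ∀ i, Finset.univ.sup (fun j => x i ⊓ y j) = x i := fun x y hxy i =>
      sup_inf_eq_of_le_sup h _ _ _ ((Finset.le_sup (Finset.mem_univ i)).trans hxy)
    refine ⟨fun n m _ _ x y hxy => ⟨fun i j => x i ⊓ y j, fun j => ?_, row x y hxy⟩,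
      fun n m _ _ x y hxy => ⟨fun i j => x i ⊓ y j, fun j => ?_, row x y hxy.le⟩⟩
    · exact Finset.sup_le fun i _ => inf_le_right
    · simpa only [inf_comm] using row y x hxy.ge j
  refine ⟨⟨fun hR x y z => le_antisymm ?_ le_inf_sup, fun h => (distrib_imp h).1⟩, distrib_imp⟩
  obtain ⟨u, hcol, hrow⟩ := hR 1 2 le_rfl one_le_two ![x ⊓ (y ⊔ z)] ![y, z]
    (by simp [Fin.univ_succ])
  have hsum : u 0 0 ⊔ u 0 1 = x ⊓ (y ⊔ z) := by simpa [Fin.univ_succ] using hrow 0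
  have hy : u 0 0 ≤ y := by simpa using hcol 0
  have hz : u 0 1 ≤ z := by simpa using hcol 1
  have hx : u 0 0 ⊔ u 0 1 ≤ x := hsum.le.trans inf_le_left
  rw [← hsum]
  exact sup_le_sup (le_inf (le_sup_left.trans hx) hy) (le_inf (le_sup_right.trans hx) hz)
end
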